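/- Let n ≥ 1, d ≥ 1 and m = Nat.choose (n + d − 1) (d − 1). Let Sym denote the subspace of EuclideanSpace ℂ (Fin n → Fin d) consisting of symmetric vectors (ψ (i ∘ σ) = ψ i for all permutations σ of Fin n). Then every subspace V ⊆ Sym with finrank V ≥ m − d + 1 contains a nonzero fully product vector. -/

import Mathlib

/-- A vector of the `n`-qudit space is *fully product* if it is a simple tensor. -/
def FullyProduct {n d : ℕ} (ψ : EuclideanSpace ℂ (Fin n → Fin d)) : Prop :=
  ∃ φ : Fin n → Fin d → ℂ, ∀ i, ψ i = ∏ j, φ j (i j)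

/-- A vector is *symmetric* if it is invariant under all permutations of the parties. -/
def SymmetricVec {n d : ℕ} (ψ : EuclideanSpace ℂ (Fin n → Fin d)) : Prop :=
  ∀ (σ : Equiv.Perm (Fin n)) (i : Fin n → Fin d), ψ (i ∘ σ) = ψ i

/-!
Symmetric tensors are the functions on unordered `n`-tuples, and in these coordinates `φ ↦ φ^{⊗n}`
is the Veronese map, given by the degree-`n` monomials in the `d` coordinates of `φ`. Fewer than `d`
linear equations cut `V` out of the symmetric subspace, and they pull back to fewer than `d`
polynomials in `d` variables that vanish at the origin. By Krull's height theorem and the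
Nullstellensatz the origin is not their only common zero, since a point of affine `d`-space has
height `d`.
-/

open MvPolynomial Module

section CommonZeros

variable {R K σ : Type*} [CommRing R] [Field K]

/-- The automorphism of the polynomial ring that substitutes `X j + v j` for each variable `X j`,
used to move a point of affine space to any other point. -/
noncomputable def translationEquiv (v : σ → R) : MvPolynomial σ R ≃ₐ[R] MvPolynomial σ R :=
  .ofAlgHom (aeval fun j ↦ X j + C (v j)) (aeval fun j ↦ X j - C (v j))
    (by ext j; simp) (by ext j; simp)

theorem aeval_translationEquiv (v x : σ → R) (f : MvPolynomial σ R) :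
    aeval x (translationEquiv v f) = aeval (x + v) f := by
  change ((aeval x).comp (aeval fun j ↦ X j + C (v j))) f = _
  congr 1
  ext j
  simp

theorem comap_translationEquiv_vanishingIdeal_singleton (v x : σ → K) :
    (vanishingIdeal K {x}).comap (translationEquiv v).toRingEquiv = vanishingIdeal K {x + v} := by
  ext f
  rw [Ideal.mem_comap, mem_vanishingIdeal_singleton_iff, mem_vanishingIdeal_singleton_iff]
  exact Eq.congr_left (aeval_translationEquiv v x f)

variable [IsAlgClosed K] [Finite σ]

theorem height_vanishingIdeal_singleton (x : σ → K) :
    (vanishingIdeal K {x}).height = Nat.card σ := by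
  have hdim : ringKrullDim (MvPolynomial σ K) = Nat.card σ := by
    simp [ringKrullDim_of_isNoetherianRing]
  have : FiniteRingKrullDim (MvPolynomial σ K) := by
    rw [finiteRingKrullDim_iff_ne_bot_and_top, hdim]
    exact ⟨by simp, WithBot.coe_injective.ne (ENat.natCast_ne_top _)⟩
  obtain ⟨M, hM, hheight⟩ := Ideal.exists_isMaximal_height (R := MvPolynomial σ K)
  obtain ⟨y, rfl⟩ := isMaximal_iff_eq_vanishingIdeal_singleton.mp hM
  have hx := comap_translationEquiv_vanishingIdeal_singleton (x - y) y
  rw [add_sub_cancel] at hx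
  rw [← hx, RingEquiv.height_comap]
  exact WithBot.coe_injective (hheight.trans hdim)

theorem card_le_of_zeroLocus_eq_singleton {ι : Type*} [Finite ι] (f : ι → MvPolynomial σ K)
    {p : σ → K} (hf : zeroLocus K (Ideal.span (Set.range f)) = {p}) :
    Nat.card σ ≤ Nat.card ι := by
  have hmin : vanishingIdeal K {p} ∈ (Ideal.span (Set.range f)).minimalPrimes := by
    rw [← Ideal.radical_minimalPrimes, ← vanishingIdeal_zeroLocus_eq_radical (K := K), hf,
      Ideal.minimalPrimes_eq_subsingleton_self]
    rfl
  have hheight := Ideal.height_le_card_of_mem_minimalPrimes_span (Set.finite_range f) hmin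
  rw [height_vanishingIdeal_singleton, Nat.cast_le] at hheight
  exact hheight.trans (Finite.card_range_le f)

theorem exists_ne_common_zero {ι : Type*} [Finite ι] (hcard : Nat.card ι < Nat.card σ)
    (f : ι → MvPolynomial σ K) {p : σ → K} (hp : ∀ k, eval p (f k) = 0) :
    ∃ q, q ≠ p ∧ ∀ k, eval q (f k) = 0 := by
  have hzero (x : σ → K) :
      x ∈ zeroLocus K (Ideal.span (Set.range f)) ↔ ∀ k, eval x (f k) = 0 := by
    simp [zeroLocus_span, aeval_eq_eval]
  by_contra! h
  refine hcard.not_ge <| card_le_of_zeroLocus_eq_singleton f <|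
    Set.eq_singleton_iff_unique_mem.mpr ⟨(hzero p).mpr hp, fun q hq ↦ ?_⟩
  by_contra hqp
  obtain ⟨k, hk⟩ := h q hqp
  exact hk ((hzero q).mp hq k)

theorem exists_ne_eval_mem {τ : Type*} [Finite τ] (F : τ → MvPolynomial σ K)
    (W : Submodule K (τ → K)) (hcodim : finrank K ((τ → K) ⧸ W) < Nat.card σ)
    {p : σ → K} (hp : (fun t ↦ eval p (F t)) ∈ W) :
    ∃ q, q ≠ p ∧ (fun t ↦ eval q (F t)) ∈ W := by
  classical
  have := Fintype.ofFinite τ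
  let L := (finBasis K ((τ → K) ⧸ W)).equivFun.toLinearMap ∘ₗ W.mkQ
  have hL (w : τ → K) : w ∈ W ↔ ∀ k, L w k = 0 := by
    rw [← Submodule.Quotient.mk_eq_zero, ← (finBasis K _).equivFun.map_eq_zero_iff]
    exact _root_.funext_iff
  let f (k) : MvPolynomial σ K := ∑ t, F t * C (L (fun t' ↦ if t = t' then 1 else 0) k)
  have hf (x : σ → K) (k) : eval x (f k) = L (fun t ↦ eval x (F t)) k := by
    rw [L.pi_apply_eq_sum_univ]
    simp [f]
  obtain ⟨q, hqp, hq⟩ := exists_ne_common_zero (by simpa using hcodim) f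
    fun k ↦ (hf p k).trans ((hL _).mp hp k)
  exact ⟨q, hqp, (hL _).mpr fun k ↦ (hf q k).symm.trans (hq k)⟩

end CommonZeros

/-- The Veronese map: all degree-`n` monomials evaluated at `φ`. A monomial is encoded by the
multiset of its variables. -/
def veronese {κ K : Type*} [CommMonoid K] (n : ℕ) (φ : κ → K) (s : Sym κ n) : K :=
  ((s : Multiset κ).map φ).prod

theorem exists_ne_zero_veronese_mem {κ K : Type*} [Fintype κ] [Field K] [IsAlgClosed K]
    {n : ℕ} (hn : n ≠ 0) (W : Submodule K (Sym κ n → K))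
    (hW : (Fintype.card κ).multichoose n < finrank K W + Fintype.card κ) :
    ∃ φ : κ → K, φ ≠ 0 ∧ veronese n φ ∈ W := by
  classical
  let F (s : Sym κ n) : MvPolynomial κ K := ((s : Multiset κ).map X).prod
  have hF (φ : κ → K) : (fun s ↦ eval φ (F s)) = veronese n φ := by
    ext s
    simp [F, veronese, map_multiset_prod]
  have hzero : veronese n (0 : κ → K) = 0 := by
    ext s
    simp [veronese, hn]
  have hcodim : finrank K ((Sym κ n → K) ⧸ W) < Nat.card κ := by
    have hadd := W.finrank_quotient_add_finrank
    rw [finrank_fintype_fun_eq_card, Sym.card_sym_eq_multichoose] at hadd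
    rw [Nat.card_eq_fintype_card]
    lia
  obtain ⟨φ, hφ, hmem⟩ := exists_ne_eval_mem F W hcodim (p := 0)
    (by simp only [hF, hzero, zero_mem])
  exact ⟨φ, hφ, hF φ ▸ hmem⟩

section SymmetricTensors

variable {ι κ K : Type*} [Fintype ι]

/-- The unordered tuple underlying a tuple `i`. Tensors pulled back along this map are the
symmetric ones. -/
def unorderedTuple (i : ι → κ) : Sym κ (Fintype.card ι) :=
  .mk (Finset.univ.val.map i) (by simp)

theorem exists_perm_comp_eq_of_unorderedTuple_eq {i i' : ι → κ}
    (h : unorderedTuple i = unorderedTuple i') : ∃ σ : Equiv.Perm ι, i ∘ σ = i' := by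
  classical
  have hfiber (b : κ) : Nonempty ({a // i' a = b} ≃ {a // i a = b}) := by
    refine Fintype.card_eq.mp ?_
    have hcount := congrArg (fun s : Sym κ _ ↦ (s : Multiset κ).count b) h
    simp only [unorderedTuple, Sym.coe_mk, Multiset.count_map, ← Finset.filter_val,
      Finset.card_val] at hcount
    simp only [Fintype.card_subtype, eq_comm (b := b), hcount]
  exact ⟨.ofFiberEquiv fun b ↦ (hfiber b).some, funext (Equiv.ofFiberEquiv_map _)⟩

theorem mem_range_funLeft_unorderedTuple [Semiring K] {ψ : (ι → κ) → K}
    (hψ : ∀ (σ : Equiv.Perm ι) (i : ι → κ), ψ (i ∘ σ) = ψ i) :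
    ψ ∈ (LinearMap.funLeft K K (unorderedTuple (ι := ι) (κ := κ))).range := by
  have hfactors : ψ.FactorsThrough unorderedTuple := fun i i' h ↦ by
    obtain ⟨σ, rfl⟩ := exists_perm_comp_eq_of_unorderedTuple_eq h
    exact (hψ σ i).symm
  exact ⟨Function.extend unorderedTuple ψ 0, funext (hfactors.extend_apply 0)⟩

theorem veronese_unorderedTuple [CommMonoid K] (φ : κ → K) (i : ι → κ) :
    veronese (Fintype.card ι) φ (unorderedTuple i) = ∏ j, φ (i j) := by
  simp [veronese, unorderedTuple]

theorem symmetric_subspace_contains_product_general [Field K] [IsAlgClosed K] [Nonempty ι]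
    [Fintype κ] (V : Submodule K ((ι → κ) → K))
    (hV : ∀ ψ ∈ V, ∀ (σ : Equiv.Perm ι) (i : ι → κ), ψ (i ∘ σ) = ψ i)
    (hrank : (Fintype.card κ).multichoose (Fintype.card ι) < finrank K V + Fintype.card κ) :
    ∃ φ : κ → K, φ ≠ 0 ∧ (fun i ↦ ∏ j, φ (i j)) ∈ V := by
  let J : (Sym κ (Fintype.card ι) → K) →ₗ[K] ((ι → κ) → K) := .funLeft K K unorderedTuple
  have hmap : (V.comap J).map J = V :=
    Submodule.map_comap_eq_self fun ψ hψ ↦ mem_range_funLeft_unorderedTuple (hV ψ hψ)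
  have hfinrank : finrank K V ≤ finrank K (V.comap J) := by
    conv_lhs => rw [← hmap]
    exact Submodule.finrank_map_le J _
  obtain ⟨φ, hφ, hmem⟩ := exists_ne_zero_veronese_mem Fintype.card_ne_zero (V.comap J)
    (hrank.trans_le (by gcongr))
  have hJ : J (veronese _ φ) = fun i ↦ ∏ j, φ (i j) := funext (veronese_unorderedTuple φ)
  exact ⟨φ, hφ, hJ ▸ hmem⟩

end SymmetricTensors

theorem prod_comp_ne_zero {ι κ K : Type*} [Fintype ι] [CommMonoidWithZero K] [NoZeroDivisors K]
    [Nontrivial K] {φ : κ → K} (hφ : φ ≠ 0) : (fun i : ι → κ ↦ ∏ j, φ (i j)) ≠ 0 := by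
  obtain ⟨a, ha⟩ := Function.ne_iff.mp hφ
  exact Function.ne_iff.mpr ⟨fun _ ↦ a, Finset.prod_ne_zero_iff.mpr fun _ _ ↦ ha⟩

theorem multichoose_eq_choose_sub_one (n : ℕ) {d : ℕ} (hd : 1 ≤ d) :
    d.multichoose n = (n + d - 1).choose (d - 1) := by
  rw [Nat.multichoose_eq, add_comm d n]
  exact Nat.choose_symm_of_eq_add (by lia)

/-- Lemma 3: any subspace of the symmetric subspace of `⊗^n ℂ^d` of dimension at
least `m − d + 1` (where `m = (n + d − 1).choose (d − 1)`) contains a nonzero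
fully product vector. -/
theorem symmetric_subspace_contains_product (n d : ℕ) (hn : 1 ≤ n) (hd : 1 ≤ d)
    (m : ℕ) (hm : m = Nat.choose (n + d - 1) (d - 1))
    (V : Submodule ℂ (EuclideanSpace ℂ (Fin n → Fin d)))
    (hV : ∀ ψ ∈ V, SymmetricVec ψ)
    (hrank : m - d + 1 ≤ Module.finrank ℂ ↥V) :
    ∃ ψ ∈ V, ψ ≠ 0 ∧ FullyProduct ψ := by
  have : NeZero n := ⟨by lia⟩
  let e : EuclideanSpace ℂ (Fin n → Fin d) ≃ₗ[ℂ] ((Fin n → Fin d) → ℂ) := WithLp.linearEquiv 2 ℂ _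
  have hsymm : ∀ ψ ∈ V.map e.toLinearMap, ∀ (σ : Equiv.Perm (Fin n)) i, ψ (i ∘ σ) = ψ i := by
    rintro _ ⟨ψ, hψ, rfl⟩
    exact hV ψ hψ
  have hlt : d.multichoose n < finrank ℂ (V.map e.toLinearMap) + d := by
    rw [multichoose_eq_choose_sub_one n hd, ← hm, e.finrank_map_eq V]
    omega
  obtain ⟨φ, hφ, ψ, hψ, hψφ⟩ := symmetric_subspace_contains_product_general _ hsymm
    (by simpa only [Fintype.card_fin] using hlt)
  refine ⟨ψ, hψ, ?_, fun _ ↦ φ, congrFun hψφ⟩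
  rintro rfl
  exact prod_comp_ne_zero hφ (hψφ.symm.trans (map_zero e))
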